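/- For every real p > 1, the explored length e_p of the worst-case exit placement satisfies π_p < e_p ≤ 2π_p; that is, for p ∈ (1,2], π_p < π_p + 2∫_0^{s_p} (z^{p²−p}(1−z^p)^{1−p} + 1)^{1/p} dz ≤ 2π_p, and for p ∈ (2,∞), π_p < π_p + 2∫_{2^{−1/p}}^{s_p} (z^{p²−p}(1−z^p)^{1−p} + 1)^{1/p} dz ≤ 2π_p. -/

import Mathlib

open Real MeasureTheory intervalIntegral

/-- The ℓ_p norm of a point of ℝ². -/
noncomputable def lpN (p : ℝ) (z : ℝ × ℝ) : ℝ := (|z.1| ^ p + |z.2| ^ p) ^ (1 / p)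

/-- The normalization factor `N_p(φ) = (|sin φ|^p + |cos φ|^p)^{1/p}`. -/
noncomputable def Np (p φ : ℝ) : ℝ := (|Real.sin φ| ^ p + |Real.cos φ| ^ p) ^ (1 / p)

/-- The parameterization `ρ_p(φ) = (cos φ, sin φ)/N_p(φ)` of the ℓ_p unit circle. -/
noncomputable def rho (p φ : ℝ) : ℝ × ℝ := (Real.cos φ / Np p φ, Real.sin φ / Np p φ)

/-- The ℓ_p speed `‖ρ_p′(t)‖_p` of the parameterization `ρ_p`. -/
noncomputable def speed (p t : ℝ) : ℝ := lpN p (deriv (rho p) t)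

/-- `π_p`, half the ℓ_p-circumference of the ℓ_p unit circle. -/
noncomputable def piP (p : ℝ) : ℝ := 2 * ∫ t in (0 : ℝ)..(Real.pi / 2), speed p t

/-!
Arc length does not depend on the parameterization: the height `y = sin φ / N_p(φ)` maps `(0, π/2)`
bijectively onto `(0, 1)`, and since a tangent vector `(a, b)` at `(x, y) ∈ C_p`, `x, y > 0`, has
`x^{p-1} a + y^{p-1} b = 0`, its `ℓ_p` norm is `|b|` times `(y^{p²-p} (1 - y^p)^{1-p} + 1)^{1/p}`.
Changing variables, the integral of the latter function over `[0, 1]` is `π_p / 2`, the length of a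
quarter of `C_p`. Being positive on `(0, 1)`, the function has a positive integral of at most
`π_p / 2` over every nondegenerate subinterval of `[0, 1]`, in particular over those defining `e_p`.
-/

/-- The `ℓ_p` speed `‖r_p′(z)‖_p` for `0 < z < 1`, where `r_p(z) = (-z, (1 - z^p)^{1/p})`
parameterizes a quarter of `C_p`; in the closed form of the integrand of `e_p`. -/
noncomputable def graphSpeed (p z : ℝ) : ℝ :=
  (z ^ (p ^ 2 - p) * (1 - z ^ p) ^ (1 - p) + 1) ^ (1 / p)

section

variable {p : ℝ}

lemma continuous_lpN (hp : 0 ≤ p) : Continuous (lpN p) :=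
  ((continuous_fst.abs.rpow_const fun _ => Or.inr hp).add
    (continuous_snd.abs.rpow_const fun _ => Or.inr hp)).rpow_const
      fun _ => Or.inr (one_div_nonneg.2 hp)

lemma abs_sin_rpow_add_abs_cos_rpow_pos (p φ : ℝ) : 0 < |sin φ| ^ p + |cos φ| ^ p := by
  have h_sin : 0 ≤ |sin φ| ^ p := by positivity
  have h_cos : 0 ≤ |cos φ| ^ p := by positivity
  rcases eq_or_ne (sin φ) 0 with h | h
  · have : cos φ ≠ 0 := fun hc => by simpa [h, hc] using sin_sq_add_cos_sq φ
    have : 0 < |cos φ| ^ p := by positivity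
    linarith
  · have : 0 < |sin φ| ^ p := by positivity
    linarith

lemma Np_pos (p φ : ℝ) : 0 < Np p φ :=
  rpow_pos_of_pos (abs_sin_rpow_add_abs_cos_rpow_pos p φ) _

lemma Np_rpow (hp : p ≠ 0) (φ : ℝ) : Np p φ ^ p = |sin φ| ^ p + |cos φ| ^ p := by
  rw [Np, one_div, rpow_inv_rpow (abs_sin_rpow_add_abs_cos_rpow_pos p φ).le hp]

lemma contDiff_Np (hp : 1 < p) : ContDiff ℝ 1 (Np p) := by
  have h_abs : ContDiff ℝ 1 fun x : ℝ => |x| ^ p := contDiff_norm_rpow (E := ℝ) hp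
  exact ((h_abs.comp contDiff_sin).add (h_abs.comp contDiff_cos)).rpow_const_of_ne
    fun φ => (abs_sin_rpow_add_abs_cos_rpow_pos p φ).ne'

lemma contDiff_rho (hp : 1 < p) : ContDiff ℝ 1 (rho p) :=
  (contDiff_cos.div (contDiff_Np hp) fun φ => (Np_pos p φ).ne').prodMk
    (contDiff_sin.div (contDiff_Np hp) fun φ => (Np_pos p φ).ne')

lemma hasDerivAt_rho (hp : 1 < p) (φ : ℝ) : HasDerivAt (rho p) (deriv (rho p) φ) φ :=
  ((contDiff_rho hp).differentiable one_ne_zero φ).hasDerivAt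

lemma continuous_speed (hp : 1 < p) : Continuous (speed p) :=
  (continuous_lpN (zero_lt_one.trans hp).le).comp ((contDiff_rho hp).continuous_deriv le_rfl)

lemma abs_rho_rpow_add_eq_one (hp : p ≠ 0) (φ : ℝ) : |(rho p φ).1| ^ p + |(rho p φ).2| ^ p = 1 := by
  have hN := Np_pos p φ
  rw [rho, abs_div, abs_div, abs_of_pos hN, div_rpow (abs_nonneg _) hN.le,
    div_rpow (abs_nonneg _) hN.le, ← add_div, Np_rpow hp, add_comm,
    div_self (abs_sin_rpow_add_abs_cos_rpow_pos p φ).ne']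

lemma rho_fst_pos {φ : ℝ} (hφ : φ ∈ Set.Ioo 0 (π / 2)) : 0 < (rho p φ).1 :=
  div_pos (cos_pos_of_mem_Ioo ⟨by linarith [hφ.1, pi_pos], hφ.2⟩) (Np_pos p φ)

lemma rho_snd_pos {φ : ℝ} (hφ : φ ∈ Set.Ioo 0 (π / 2)) : 0 < (rho p φ).2 :=
  div_pos (sin_pos_of_pos_of_lt_pi hφ.1 (by linarith [hφ.2, pi_pos])) (Np_pos p φ)

lemma rho_rpow_add_eq_one (hp : p ≠ 0) {φ : ℝ} (hφ : φ ∈ Set.Ioo 0 (π / 2)) :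
    (rho p φ).1 ^ p + (rho p φ).2 ^ p = 1 := by
  simpa only [abs_of_pos (rho_fst_pos hφ), abs_of_pos (rho_snd_pos hφ)]
    using abs_rho_rpow_add_eq_one hp φ

lemma rho_snd_div_rho_fst (p φ : ℝ) : (rho p φ).2 / (rho p φ).1 = tan φ := by
  rw [rho, div_div_div_cancel_right₀ (Np_pos p φ).ne', tan_eq_sin_div_cos]

lemma rho_snd_lt_one (hp : 0 < p) {φ : ℝ} (hφ : φ ∈ Set.Ioo 0 (π / 2)) : (rho p φ).2 < 1 := by
  have hx : 0 < (rho p φ).1 ^ p := rpow_pos_of_pos (rho_fst_pos hφ) p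
  rw [← rpow_lt_one_iff' (rho_snd_pos hφ).le hp]
  linarith [rho_rpow_add_eq_one hp.ne' hφ]

lemma injOn_rho_snd (hp : p ≠ 0) : Set.InjOn (fun φ => (rho p φ).2) (Set.Ioo 0 (π / 2)) := by
  intro φ hφ ψ hψ (h_snd : (rho p φ).2 = (rho p ψ).2)
  have h_fst : (rho p φ).1 = (rho p ψ).1 := by
    refine (rpow_left_inj (rho_fst_pos hφ).le (rho_fst_pos hψ).le hp).1 ?_
    linarith [rho_rpow_add_eq_one hp hφ, rho_rpow_add_eq_one hp hψ, congrArg (· ^ p) h_snd]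
  have h_Ioo : Set.Ioo 0 (π / 2) ⊆ Set.Ioo (-(π / 2)) (π / 2) :=
    Set.Ioo_subset_Ioo_left (by linarith [pi_pos])
  refine injOn_tan (h_Ioo hφ) (h_Ioo hψ) ?_
  rw [← rho_snd_div_rho_fst p, ← rho_snd_div_rho_fst p, h_fst, h_snd]

lemma image_rho_snd (hp : 1 < p) :
    (fun φ => (rho p φ).2) '' Set.Ioo 0 (π / 2) = Set.Ioo 0 1 := by
  have hp₀ : 0 < p := zero_lt_one.trans hp
  refine Set.Subset.antisymm ?_ ?_
  · rintro _ ⟨φ, hφ, rfl⟩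
    exact ⟨rho_snd_pos hφ, rho_snd_lt_one hp₀ hφ⟩
  · have h_zero : (rho p 0).2 = 0 := by simp [rho]
    have h_one : (rho p (π / 2)).2 = 1 := by simp [rho, Np, zero_rpow hp₀.ne']
    simpa only [h_zero, h_one] using
      intermediate_value_Ioo pi_div_two_pos.le (contDiff_rho hp).continuous.snd.continuousOn

lemma tangent_of_rpow_add_eventuallyEq_one (hp : p ≠ 0) {γ : ℝ → ℝ × ℝ} {v : ℝ × ℝ} {t : ℝ}
    (hγ : HasDerivAt γ v t) (hx : (γ t).1 ≠ 0) (hy : (γ t).2 ≠ 0)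
    (h_circle : (fun u => (γ u).1 ^ p + (γ u).2 ^ p) =ᶠ[nhds t] fun _ => 1) :
    (γ t).1 ^ (p - 1) * v.1 + (γ t).2 ^ (p - 1) * v.2 = 0 := by
  have h_fst : HasDerivAt (fun u => (γ u).1) v.1 t :=
    (ContinuousLinearMap.fst ℝ ℝ ℝ).hasFDerivAt.comp_hasDerivAt t hγ
  have h_snd : HasDerivAt (fun u => (γ u).2) v.2 t :=
    (ContinuousLinearMap.snd ℝ ℝ ℝ).hasFDerivAt.comp_hasDerivAt t hγ
  have h_deriv := (h_fst.rpow_const (p := p) (Or.inl hx)).add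
    (h_snd.rpow_const (p := p) (Or.inl hy))
  have h_zero := h_deriv.unique ((hasDerivAt_const t (1 : ℝ)).congr_of_eventuallyEq h_circle)
  refine (mul_eq_zero.1 (?_ : p * _ = 0)).resolve_left hp
  linear_combination h_zero

lemma abs_rpow_eq_of_tangent {x y a b : ℝ} (hx : 0 < x) (hy : 0 ≤ y) (hxy : x ^ p + y ^ p = 1)
    (h_tangent : x ^ (p - 1) * a + y ^ (p - 1) * b = 0) :
    |a| ^ p = y ^ (p ^ 2 - p) * (1 - y ^ p) ^ (1 - p) * |b| ^ p := by
  have hX : 0 < x ^ (p - 1) := rpow_pos_of_pos hx _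
  have hY : 0 ≤ y ^ (p - 1) := rpow_nonneg hy _
  have h_abs : |a| = y ^ (p - 1) * |b| / x ^ (p - 1) := by
    have := congrArg abs (eq_neg_of_add_eq_zero_left h_tangent)
    rw [abs_neg, abs_mul, abs_mul, abs_of_pos hX, abs_of_nonneg hY] at this
    rw [eq_div_iff hX.ne', mul_comm, this]
  have h_x : 1 - y ^ p = x ^ p := by linarith
  calc |a| ^ p = y ^ ((p - 1) * p) * |b| ^ p / x ^ ((p - 1) * p) := by
        rw [h_abs, div_rpow (by positivity) hX.le, mul_rpow hY (abs_nonneg b), ← rpow_mul hy,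
          ← rpow_mul hx.le]
    _ = y ^ (p ^ 2 - p) * (1 - y ^ p) ^ (1 - p) * |b| ^ p := by
        rw [h_x, ← rpow_mul hx.le, show p * (1 - p) = -((p - 1) * p) by ring, rpow_neg hx.le,
          show p ^ 2 - p = (p - 1) * p by ring]
        ring

lemma lpN_eq_abs_mul_graphSpeed (hp : p ≠ 0) {x y : ℝ} {v : ℝ × ℝ} (hx : 0 < x) (hy : 0 ≤ y)
    (hxy : x ^ p + y ^ p = 1) (h_tangent : x ^ (p - 1) * v.1 + y ^ (p - 1) * v.2 = 0) :
    lpN p v = |v.2| * graphSpeed p y := by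
  have h_x : 0 ≤ 1 - y ^ p := by linarith [rpow_nonneg hx.le p]
  rw [lpN, abs_rpow_eq_of_tangent hx hy hxy h_tangent, ← add_one_mul,
    mul_rpow (by positivity) (by positivity), one_div, rpow_rpow_inv (abs_nonneg _) hp, mul_comm,
    graphSpeed, one_div]

lemma speed_eq_abs_deriv_mul_graphSpeed (hp : 1 < p) {φ : ℝ} (hφ : φ ∈ Set.Ioo 0 (π / 2)) :
    speed p φ = |(deriv (rho p) φ).2| * graphSpeed p (rho p φ).2 := by
  have hp₀ : p ≠ 0 := (zero_lt_one.trans hp).ne'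
  refine lpN_eq_abs_mul_graphSpeed hp₀ (rho_fst_pos hφ) (rho_snd_pos hφ).le
    (rho_rpow_add_eq_one hp₀ hφ) (tangent_of_rpow_add_eventuallyEq_one hp₀ (hasDerivAt_rho hp φ)
      (rho_fst_pos hφ).ne' (rho_snd_pos hφ).ne' ?_)
  filter_upwards [isOpen_Ioo.mem_nhds hφ] with u hu using rho_rpow_add_eq_one hp₀ hu

lemma hasDerivWithinAt_rho_snd (hp : 1 < p) (s : Set ℝ) (φ : ℝ) :
    HasDerivWithinAt (fun φ => (rho p φ).2) (deriv (rho p) φ).2 s φ :=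
  ((ContinuousLinearMap.snd ℝ ℝ ℝ).hasFDerivAt.comp_hasDerivAt φ
    (hasDerivAt_rho hp φ)).hasDerivWithinAt

lemma intervalIntegrable_graphSpeed (hp : 1 < p) :
    IntervalIntegrable (graphSpeed p) volume 0 1 := by
  rw [intervalIntegrable_iff_integrableOn_Ioo_of_le zero_le_one, ← image_rho_snd hp,
    integrableOn_image_iff_integrableOn_abs_deriv_smul measurableSet_Ioo
      (fun φ _ => hasDerivWithinAt_rho_snd hp _ φ) (injOn_rho_snd (zero_lt_one.trans hp).ne')]
  refine IntegrableOn.congr_fun ?_ (fun φ hφ => speed_eq_abs_deriv_mul_graphSpeed hp hφ)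
    measurableSet_Ioo
  exact ((continuous_speed hp).integrableOn_Icc).mono_set Set.Ioo_subset_Icc_self

lemma two_mul_integral_graphSpeed (hp : 1 < p) : 2 * ∫ z in 0..1, graphSpeed p z = piP p := by
  rw [piP, integral_of_le zero_le_one, integral_of_le pi_div_two_pos.le,
    integral_Ioc_eq_integral_Ioo, integral_Ioc_eq_integral_Ioo, ← image_rho_snd hp,
    integral_image_eq_integral_abs_deriv_smul measurableSet_Ioo
      (fun φ _ => hasDerivWithinAt_rho_snd hp _ φ) (injOn_rho_snd (zero_lt_one.trans hp).ne'),
    setIntegral_congr_fun measurableSet_Ioo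
      fun φ hφ => speed_eq_abs_deriv_mul_graphSpeed hp hφ]
  rfl

lemma graphSpeed_pos (hp : 0 < p) {z : ℝ} (hz : z ∈ Set.Ioo 0 1) : 0 < graphSpeed p z := by
  have hz₀ : 0 < z := hz.1
  have : 0 ≤ 1 - z ^ p := sub_nonneg.2 (rpow_le_one hz₀.le hz.2.le hp.le)
  unfold graphSpeed
  positivity

theorem stmt_19_general (hp : 1 < p) {a s : ℝ} (ha : 0 ≤ a) (has : a < s) (hs : s ≤ 1) :
    piP p < piP p + 2 * ∫ z in a..s, graphSpeed p z ∧
      piP p + 2 * ∫ z in a..s, graphSpeed p z ≤ 2 * piP p := by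
  have h_pos : ∀ z ∈ Set.Ioo 0 1, 0 < graphSpeed p z :=
    fun z hz => graphSpeed_pos (zero_lt_one.trans hp) hz
  have h_int := intervalIntegrable_graphSpeed hp
  have h_lower : 0 < ∫ z in a..s, graphSpeed p z := by
    refine intervalIntegral_pos_of_pos_on (h_int.mono_set ?_)
      (fun z hz => h_pos z ⟨ha.trans_lt hz.1, hz.2.trans_le hs⟩) has
    rw [Set.uIcc_of_le has.le, Set.uIcc_of_le zero_le_one]
    exact Set.Icc_subset_Icc ha hs
  have h_upper : ∫ z in a..s, graphSpeed p z ≤ ∫ z in 0..1, graphSpeed p z := by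
    refine integral_mono_interval ha has.le hs ?_ h_int
    rw [← restrict_Ioo_eq_restrict_Ioc]
    filter_upwards [ae_restrict_mem measurableSet_Ioo] with z hz using (h_pos z hz).le
  constructor <;> linarith [two_mul_integral_graphSpeed hp]

lemma add_one_rpow_neg_one_div_le_one (hp : 0 ≤ p) {c : ℝ} (hc : 0 ≤ c) :
    (c + 1) ^ (-(1 / p)) ≤ 1 :=
  rpow_le_one_of_one_le_of_nonpos (by linarith) (neg_nonpos.2 (one_div_nonneg.2 hp))

lemma two_rpow_neg_one_div_lt (hp : 0 < p) {c : ℝ} (hc₀ : 0 ≤ c) (hc₁ : c < 1) :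
    (2 : ℝ) ^ (-(1 / p)) < (c + 1) ^ (-(1 / p)) :=
  rpow_lt_rpow_of_neg (by linarith) (by linarith) (neg_lt_zero.2 (one_div_pos.2 hp))

end

/-- For every `p > 1`, the explored length `e_p` of the worst-case exit placement
satisfies `π_p < e_p ≤ 2π_p`, where `e_p` is defined piecewise for `p ∈ (1,2]` and
for `p ∈ (2,∞)` (the latter via the root `w_p ∈ (0,1)` of `w^p + 1 = 2(1−w)^p`). -/
theorem stmt_19 (p : ℝ) (hp : 1 < p) :
    (p ≤ 2 →
      let sp : ℝ := (((2 : ℝ) ^ p - 1) ^ (1 / (p - 1)) + 1) ^ (-(1 / p))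
      let ep : ℝ := piP p
        + 2 * ∫ z in (0 : ℝ)..sp, (z ^ (p ^ 2 - p) * (1 - z ^ p) ^ (1 - p) + 1) ^ (1 / p)
      piP p < ep ∧ ep ≤ 2 * piP p) ∧
    (2 < p → ∀ w ∈ Set.Ioo (0 : ℝ) 1, w ^ p + 1 = 2 * (1 - w) ^ p →
      let sp : ℝ := (w ^ (p / (p - 1)) + 1) ^ (-(1 / p))
      let ep : ℝ := piP p
        + 2 * ∫ z in ((2 : ℝ) ^ (-(1 / p)))..sp,
            (z ^ (p ^ 2 - p) * (1 - z ^ p) ^ (1 - p) + 1) ^ (1 / p)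
      piP p < ep ∧ ep ≤ 2 * piP p) := by
  have hp₀ : 0 < p := zero_lt_one.trans hp
  constructor
  · intro _
    have hc : 0 ≤ ((2 : ℝ) ^ p - 1) ^ (1 / (p - 1)) :=
      rpow_nonneg (sub_nonneg.2 (one_le_rpow one_le_two hp₀.le)) _
    exact stmt_19_general hp le_rfl (by positivity) (add_one_rpow_neg_one_div_le_one hp₀.le hc)
  · intro _ w hw _
    have hc₀ : 0 ≤ w ^ (p / (p - 1)) := rpow_nonneg hw.1.le _
    have hc₁ : w ^ (p / (p - 1)) < 1 :=
      rpow_lt_one hw.1.le hw.2 (div_pos hp₀ (sub_pos.2 hp))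
    exact stmt_19_general hp (by positivity) (two_rpow_neg_one_div_lt hp₀ hc₀ hc₁)
      (add_one_rpow_neg_one_div_le_one hp₀.le hc₀)
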